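/- arXiv:1907.12403 — 4 statements merged into one kernel-verified Lean document; each statement's English description precedes it below -/
import Mathlib

section
/- For the noiseless closed-loop Markov jump linear system with one time-step delayed mode observations, the indicator-weighted first moments satisfy, for every k ≥ 0 and all 1 ≤ i, j ≤ N: m_{ij}^{(k+1)} = (A · Σ_{ℓ=1}^N m_{ℓi}^{(k)} + ν̂_i · B · Σ_{ℓ=1}^N K_ℓ m_{ℓi}^{(k)}) · p_{ij}. -/
/-!
Write `S_b = {θ_{k+1} = j, ν_k = b, θ_k = i}` and `T = {θ_k = i}`. The Markov hypothesis says that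
`μ` restricted to `S_b` and `p_{ij} Pr(ν_k = b ∣ θ_k = i)` times `μ` restricted to `T` agree on the
past σ-algebra, hence integrate every past-measurable function in the same way
(`setIntegral_markov`). By induction `x_k` is past-measurable and takes finitely many values
(`measurable_state`, `finite_range_state`), so all integrals below are genuine. Splitting
`m_{ij}^{(k+1)}` according to the value of `ν_k` then makes `x_{k+1}` on each piece the
past-measurable function `A x_k` or `A x_k + B K_{θ_{k-1}} x_k`, so that
`m_{ij}^{(k+1)} = p_{ij} (E[A x_k 1_T] + ν̂_i E[B K_{θ_{k-1}} x_k 1_T])`; splitting `T` according to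
the value of `θ_{k-1}` gives the recursion.
-/

open MeasureTheory Matrix ProbabilityTheory Filter
open scoped BigOperators ComplexOrder

noncomputable section

/-- The canonical ring homomorphism from an `RCLike` field (`ℝ` or `ℂ`) to `ℂ`. -/
def rcToComplex (𝕜 : Type*) [RCLike 𝕜] : 𝕜 →+* ℂ where
  toFun z := ⟨RCLike.re z, RCLike.im z⟩
  map_one' := by simp [Complex.ext_iff]
  map_mul' z w := by simp [Complex.ext_iff, RCLike.mul_re, RCLike.mul_im]
  map_zero' := by simp [Complex.ext_iff]
  map_add' z w := by simp [Complex.ext_iff]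

/-- Spectral radius of a complex square matrix: the largest absolute value of its
(complex) eigenvalues. -/
def specRad {n : Type*} [Fintype n] [DecidableEq n] (M : Matrix n n ℂ) : ℝ :=
  sSup ((fun z => ‖z‖) '' spectrum ℂ M)

/-- Spectral radius of a square matrix over `ℝ` or `ℂ`, computed over `ℂ`. -/
def specRadK {𝕜 : Type*} [RCLike 𝕜] {n : Type*} [Fintype n] [DecidableEq n]
    (M : Matrix n n 𝕜) : ℝ :=
  specRad (M.map (rcToComplex 𝕜))

variable {𝕜 : Type*} [RCLike 𝕜]

/-- `vec²` of an `N × N` array of `n_x × n_x` blocks `S = [S_{ℓi}]` (block `S ℓ i` sits in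
block-row `ℓ` and block-column `i`): the index `((i, ℓ), (c, r))` addresses the entry in row `r`
and column `c` of the block `S_{ℓ i}`, corresponding to the stacking
`vec(S₁₁),…,vec(S_{N1}), vec(S₁₂),…,vec(S_{NN})` with column-major `vec`. -/
def vec2 {N nx : ℕ} (S : Fin N → Fin N → Matrix (Fin nx) (Fin nx) 𝕜) :
    (Fin N × Fin N) × Fin nx × Fin nx → 𝕜 :=
  fun q => S q.1.2 q.1.1 q.2.2 q.2.1

/-- `vec²` of an `N × N` array of vectors in `𝕜^{n_x}`. -/
def vec2v {N nx : ℕ} (m : Fin N → Fin N → (Fin nx → 𝕜)) :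
    (Fin N × Fin N) × Fin nx → 𝕜 :=
  fun q => m q.1.2 q.1.1 q.2

/-- The operator `L`, blockwise: `L_{ij}(S)`. -/
def Lop {N nx nu : ℕ} (A : Matrix (Fin nx) (Fin nx) 𝕜) (B : Matrix (Fin nx) (Fin nu) 𝕜)
    (K : Fin N → Matrix (Fin nu) (Fin nx) 𝕜) (p : Fin N → Fin N → ℝ) (νh : Fin N → ℝ)
    (S : Fin N → Fin N → Matrix (Fin nx) (Fin nx) 𝕜) (i j : Fin N) :
    Matrix (Fin nx) (Fin nx) 𝕜 :=
  ((p i j : ℝ) : 𝕜) •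
    (A * (∑ ℓ, S ℓ i) * Aᴴ
      + ((νh i : ℝ) : 𝕜) • (B * (∑ ℓ, K ℓ * S ℓ i * (K ℓ)ᴴ) * Bᴴ)
      + ((νh i : ℝ) : 𝕜) • (A * (∑ ℓ, S ℓ i * (K ℓ)ᴴ) * Bᴴ)
      + ((νh i : ℝ) : 𝕜) • (B * (∑ ℓ, K ℓ * S ℓ i) * Aᴴ))

/-- The operator `T`, blockwise: `T_{ℓi}(S)`. -/
def Tadj {N nx nu : ℕ} (A : Matrix (Fin nx) (Fin nx) 𝕜) (B : Matrix (Fin nx) (Fin nu) 𝕜)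
    (K : Fin N → Matrix (Fin nu) (Fin nx) 𝕜) (p : Fin N → Fin N → ℝ) (νh : Fin N → ℝ)
    (S : Fin N → Fin N → Matrix (Fin nx) (Fin nx) 𝕜) (ℓ i : Fin N) :
    Matrix (Fin nx) (Fin nx) 𝕜 :=
  Aᴴ * (∑ j, ((p i j : ℝ) : 𝕜) • S i j) * A
    + ((νh i : ℝ) : 𝕜) • ((K ℓ)ᴴ * Bᴴ * (∑ j, ((p i j : ℝ) : 𝕜) • S i j) * (B * K ℓ))
    + ((νh i : ℝ) : 𝕜) • ((K ℓ)ᴴ * Bᴴ * (∑ j, ((p i j : ℝ) : 𝕜) • S i j) * A)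
    + ((νh i : ℝ) : 𝕜) • (Aᴴ * (∑ j, ((p i j : ℝ) : 𝕜) • S i j) * (B * K ℓ))

/-- σ-algebra of the "past" at time `k`: generated by `θ_{-1},…,θ_{k-1}` and `ν_0,…,ν_{k-1}`. -/
def pastSig {Ω : Type*} {N : ℕ} (θ : ℤ → Ω → Fin N) (ν : ℕ → Ω → Bool) (k : ℕ) :
    MeasurableSpace Ω :=
  (⨆ t : ℤ, ⨆ (_ : -1 ≤ t), ⨆ (_ : t < (k : ℤ)), MeasurableSpace.comap (θ t) ⊤) ⊔
    ⨆ t : ℕ, ⨆ (_ : t < k), MeasurableSpace.comap (ν t) ⊤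

/-- σ-algebra generated by `θ_{-1},…,θ_{k-1}`. -/
def pastTheta {Ω : Type*} {N : ℕ} (θ : ℤ → Ω → Fin N) (k : ℤ) : MeasurableSpace Ω :=
  ⨆ t : ℤ, ⨆ (_ : -1 ≤ t), ⨆ (_ : t < k), MeasurableSpace.comap (θ t) ⊤

/-- σ-algebra generated by the pairs `(θ_t, θ_{t-1})` for `0 ≤ t ≤ k-1`. -/
def pastPair {Ω : Type*} {N : ℕ} (θ : ℤ → Ω → Fin N) (k : ℕ) : MeasurableSpace Ω :=
  ⨆ t : ℕ, ⨆ (_ : t < k),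
    MeasurableSpace.comap (fun ω => (θ (t : ℤ) ω, θ ((t : ℤ) - 1) ω)) ⊤

/-- Indicator-weighted first moment `m_{ℓi}^{(k)} = E[x_k 1_{θ_k = i, θ_{k-1} = ℓ}]`. -/
def mMom {Ω : Type*} [MeasurableSpace Ω] (μ : Measure Ω) {N nx : ℕ}
    (θ : ℤ → Ω → Fin N) (x : ℕ → Ω → Fin nx → 𝕜) (k : ℕ) (ℓ i : Fin N) : Fin nx → 𝕜 :=
  fun r => ∫ ω in {ω | θ (k : ℤ) ω = i ∧ θ ((k : ℤ) - 1) ω = ℓ}, x k ω r ∂μ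

/-- Indicator-weighted second moment `M_{ℓi}^{(k)} = E[x_k x_k^* 1_{θ_k = i, θ_{k-1} = ℓ}]`. -/
def MMom {Ω : Type*} [MeasurableSpace Ω] (μ : Measure Ω) {N nx : ℕ}
    (θ : ℤ → Ω → Fin N) (x : ℕ → Ω → Fin nx → 𝕜) (k : ℕ) (ℓ i : Fin N) :
    Matrix (Fin nx) (Fin nx) 𝕜 :=
  Matrix.of fun r c =>
    ∫ ω in {ω | θ (k : ℤ) ω = i ∧ θ ((k : ℤ) - 1) ω = ℓ}, x k ω r * star (x k ω c) ∂μ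

/-- Joint probability `π_{ℓi}^{(k)} = Pr(θ_k = i, θ_{k-1} = ℓ)`. -/
def piP {Ω : Type*} [MeasurableSpace Ω] (μ : Measure Ω) {N : ℕ}
    (θ : ℤ → Ω → Fin N) (k : ℕ) (ℓ i : Fin N) : ℝ :=
  (μ {ω | θ (k : ℤ) ω = i ∧ θ ((k : ℤ) - 1) ω = ℓ}).toReal

/-- A measure on a real vector space is Gaussian if every real-linear functional pushes it
forward to a one-dimensional Gaussian law. -/
def IsGaussianLaw {E : Type*} [AddCommGroup E] [Module ℝ E] [MeasurableSpace E]
    (γ : Measure E) : Prop :=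
  ∀ L : E →ₗ[ℝ] ℝ, ∃ (m : ℝ) (v : NNReal), γ.map L = ProbabilityTheory.gaussianReal m v

lemma pastSig_le {Ω : Type*} [m0 : MeasurableSpace Ω] {N : ℕ} {θ : ℤ → Ω → Fin N}
    (hθ : ∀ t, Measurable (θ t)) {ν : ℕ → Ω → Bool} (hν : ∀ t, Measurable (ν t)) (k : ℕ) :
    pastSig θ ν k ≤ m0 :=
  sup_le (iSup_le fun t => iSup_le fun _ => iSup_le fun _ => (hθ t).comap_le)
    (iSup_le fun t => iSup_le fun _ => (hν t).comap_le)

lemma pastSig_mono {Ω : Type*} {N : ℕ} (θ : ℤ → Ω → Fin N) (ν : ℕ → Ω → Bool) (k : ℕ) :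
    pastSig θ ν k ≤ pastSig θ ν (k + 1) := by
  refine sup_le_sup ?_ ?_
  · exact iSup_mono fun t => iSup_mono fun _ => iSup_le fun h =>
      le_iSup_of_le (by push_cast; lia) le_rfl
  · exact iSup_mono fun t => iSup_le fun h => le_iSup_of_le (by lia) le_rfl

lemma measurable_theta_past {Ω : Type*} {N : ℕ} (θ : ℤ → Ω → Fin N) (ν : ℕ → Ω → Bool) (k : ℕ) :
    Measurable[pastSig θ ν k] (θ ((k : ℤ) - 1)) := by
  refine measurable_iff_comap_le.2 (le_sup_of_le_left ?_)
  exact le_iSup_of_le ((k : ℤ) - 1) (le_iSup_of_le (by lia) (le_iSup_of_le (by lia) le_rfl))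

lemma measurable_nu_past {Ω : Type*} {N : ℕ} (θ : ℤ → Ω → Fin N) (ν : ℕ → Ω → Bool) (k : ℕ) :
    Measurable[pastSig θ ν (k + 1)] (ν k) := by
  refine measurable_iff_comap_le.2 (le_sup_of_le_right ?_)
  exact le_iSup_of_le k (le_iSup_of_le (by lia) le_rfl)

lemma measurable_mulVec_apply {Ω 𝕜 : Type*} [RCLike 𝕜] {n d : ℕ} {mΩ : MeasurableSpace Ω}
    {ι : Type*} [MeasurableSpace ι] [DiscreteMeasurableSpace ι]
    (M : ι → Matrix (Fin d) (Fin n) 𝕜) {g : Ω → ι} (hg : Measurable g) {y : Ω → Fin n → 𝕜}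
    (hy : ∀ c, Measurable fun ω => y ω c) (r : Fin d) :
    Measurable fun ω => (M (g ω) *ᵥ y ω) r := by
  simp only [Matrix.mulVec, dotProduct]
  exact Finset.measurable_sum _ fun c _ =>
    ((Measurable.of_discrete (f := fun a => M a r c)).comp hg).mul (hy c)

section State

variable {𝕜 : Type*} [RCLike 𝕜] {Ω : Type*} {N nx nu : ℕ}
  {A : Matrix (Fin nx) (Fin nx) 𝕜} {B : Matrix (Fin nx) (Fin nu) 𝕜}
  {K : Fin N → Matrix (Fin nu) (Fin nx) 𝕜} {θ : ℤ → Ω → Fin N} {ν : ℕ → Ω → Bool}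
  {x0 : Fin nx → 𝕜} {x : ℕ → Ω → Fin nx → 𝕜}

lemma measurable_state (hx0 : ∀ ω, x 0 ω = x0)
    (hxrec : ∀ (k : ℕ) (ω : Ω),
      x (k + 1) ω
        = (A + (if ν k ω then (1 : 𝕜) else 0) • (B * K (θ ((k : ℤ) - 1) ω))) *ᵥ x k ω)
    (k : ℕ) : ∀ r, Measurable[pastSig θ ν k] fun ω => x k ω r := by
  induction k with
  | zero => intro r; simp only [hx0]; exact measurable_const
  | succ k ih =>
    intro r
    simp only [hxrec]
    have h1 := (measurable_theta_past θ ν k).mono (pastSig_mono θ ν k) le_rfl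
    exact measurable_mulVec_apply (mΩ := pastSig θ ν (k + 1))
      (fun a : Bool × Fin N => A + (if a.1 then (1 : 𝕜) else 0) • (B * K a.2))
      ((measurable_nu_past θ ν k).prodMk h1) (fun c => (ih c).mono (pastSig_mono θ ν k) le_rfl) r

lemma finite_range_state (hx0 : ∀ ω, x 0 ω = x0)
    (hxrec : ∀ (k : ℕ) (ω : Ω),
      x (k + 1) ω
        = (A + (if ν k ω then (1 : 𝕜) else 0) • (B * K (θ ((k : ℤ) - 1) ω))) *ᵥ x k ω)
    (k : ℕ) : (Set.range (x k)).Finite := by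
  induction k with
  | zero =>
    refine (Set.finite_singleton x0).subset ?_
    rintro _ ⟨ω, rfl⟩
    exact hx0 ω
  | succ k ih =>
    refine (Set.Finite.image2
      (fun (a : Bool × Fin N) y => (A + (if a.1 then (1 : 𝕜) else 0) • (B * K a.2)) *ᵥ y)
      Set.finite_univ ih).subset ?_
    rintro _ ⟨ω, rfl⟩
    exact ⟨(ν k ω, θ ((k : ℤ) - 1) ω), trivial, x k ω, ⟨ω, rfl⟩, (hxrec k ω).symm⟩

end State

lemma integrable_of_finite_range {Ω 𝕜 : Type*} [RCLike 𝕜] [MeasurableSpace Ω] {μ : Measure Ω}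
    [IsFiniteMeasure μ] {f : Ω → 𝕜} (hf : Measurable f) (hfin : (Set.range f).Finite) :
    Integrable f μ := by
  obtain ⟨C, hC⟩ := hfin.isBounded.exists_norm_le
  exact Integrable.of_bound hf.aestronglyMeasurable C (ae_of_all _ fun ω => hC _ ⟨ω, rfl⟩)

/-- Two events whose traces on a sub-σ-algebra have proportional measures integrate every function
measurable with respect to that sub-σ-algebra proportionally. -/
lemma setIntegral_markov {Ω 𝕜 : Type*} [RCLike 𝕜] {m m0 : MeasurableSpace Ω} (hm : m ≤ m0)
    {μ : Measure Ω} [IsFiniteMeasure μ] {S T : Set Ω} {c : ℝ} (hc : 0 ≤ c)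
    (h : ∀ E, MeasurableSet[m] E → (μ (S ∩ E)).toReal = c * (μ (T ∩ E)).toReal)
    {f : Ω → 𝕜} (hf : Measurable[m] f) :
    ∫ ω in S, f ω ∂μ = (c : 𝕜) * ∫ ω in T, f ω ∂μ := by
  have key : (μ.restrict S).trim hm = ENNReal.ofReal c • (μ.restrict T).trim hm := by
    refine @Measure.ext _ m _ _ fun E hE => ?_
    rw [Measure.smul_apply, trim_measurableSet_eq hm hE, trim_measurableSet_eq hm hE,
      Measure.restrict_apply (hm E hE), Measure.restrict_apply (hm E hE), Set.inter_comm E,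
      Set.inter_comm E, smul_eq_mul, ← ENNReal.toReal_eq_toReal_iff' (measure_ne_top _ _)
        (ENNReal.mul_ne_top ENNReal.ofReal_ne_top (measure_ne_top _ _)), ENNReal.toReal_mul,
      ENNReal.toReal_ofReal hc, h E hE]
  have hs : StronglyMeasurable[m] f := hf.stronglyMeasurable
  rw [integral_trim hm hs, key, integral_smul_measure, ENNReal.toReal_ofReal hc,
    ← integral_trim hm hs, RCLike.real_smul_eq_coe_mul]

lemma integral_mulVec_apply {Ω 𝕜 : Type*} [RCLike 𝕜] [MeasurableSpace Ω] {μ : Measure Ω} {n d : ℕ}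
    (M : Matrix (Fin d) (Fin n) 𝕜) {y : Ω → Fin n → 𝕜}
    (hy : ∀ c, Integrable (fun ω => y ω c) μ) (r : Fin d) :
    ∫ ω, (M *ᵥ y ω) r ∂μ = (M *ᵥ fun c => ∫ ω, y ω c ∂μ) r := by
  simp only [Matrix.mulVec, dotProduct]
  rw [integral_finsetSum _ fun c _ => (hy c).const_mul _]
  simp only [integral_const_mul]

/-- If the matrix is selected by a finite-valued random index `g`, the integral splits over the
values of `g`. -/
lemma setIntegral_mulVec_fiber {Ω 𝕜 : Type*} [RCLike 𝕜] [MeasurableSpace Ω] {μ : Measure Ω}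
    [IsFiniteMeasure μ] {N n d : ℕ} (M : Fin N → Matrix (Fin d) (Fin n) 𝕜) {g : Ω → Fin N}
    (hg : Measurable g) {y : Ω → Fin n → 𝕜} (hy : ∀ c, Measurable fun ω => y ω c)
    (hfin : (Set.range y).Finite) {T : Set Ω} (hT : MeasurableSet T) (r : Fin d) :
    ∫ ω in T, (M (g ω) *ᵥ y ω) r ∂μ
      = ∑ ℓ, (M ℓ *ᵥ fun c => ∫ ω in T ∩ g ⁻¹' {ℓ}, y ω c ∂μ) r := by
  have hint : Integrable (fun ω => (M (g ω) *ᵥ y ω) r) μ := by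
    refine integrable_of_finite_range (measurable_mulVec_apply M hg hy r) ?_
    refine (Set.Finite.image2 (fun a v => (M a *ᵥ v) r) Set.finite_univ hfin).subset ?_
    rintro _ ⟨ω, rfl⟩
    exact ⟨g ω, trivial, y ω, ⟨ω, rfl⟩, rfl⟩
  have hyi : ∀ c, Integrable (fun ω => y ω c) μ := fun c => by
    refine integrable_of_finite_range (hy c) ((hfin.image fun v => v c).subset ?_)
    rintro _ ⟨ω, rfl⟩
    exact ⟨y ω, ⟨ω, rfl⟩, rfl⟩
  have hms : ∀ ℓ, MeasurableSet (T ∩ g ⁻¹' {ℓ}) := fun ℓ =>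
    hT.inter (hg (measurableSet_singleton ℓ))
  have hU : T = ⋃ ℓ, T ∩ g ⁻¹' {ℓ} := by ext ω; simp
  conv_lhs => rw [hU]
  rw [integral_iUnion_fintype hms ?_ fun ℓ => hint.integrableOn]
  · refine Finset.sum_congr rfl fun ℓ _ => ?_
    rw [← integral_mulVec_apply (M ℓ) fun c => (hyi c).integrableOn]
    refine setIntegral_congr_fun (hms ℓ) ?_
    rintro ω ⟨-, rfl⟩
    rfl
  · intro a b hab
    refine Set.disjoint_left.2 ?_
    rintro ω ⟨-, rfl⟩ ⟨-, h⟩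
    exact hab h

/-- First-moment recursion for the noiseless closed-loop MJLS with one
time-step delayed mode observations. -/
theorem firstMoment_recursion
    {𝕜 : Type*} [RCLike 𝕜]
    {N nx nu : ℕ} (hN : 1 ≤ N) (hnx : 1 ≤ nx) (hnu : 1 ≤ nu)
    (A : Matrix (Fin nx) (Fin nx) 𝕜) (B : Matrix (Fin nx) (Fin nu) 𝕜)
    (K : Fin N → Matrix (Fin nu) (Fin nx) 𝕜)
    (p : Fin N → Fin N → ℝ) (hp_nonneg : ∀ i j, 0 ≤ p i j) (hp_row : ∀ i, ∑ j, p i j = 1)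
    (νh : Fin N → ℝ) (hνh : ∀ i, νh i ∈ Set.Icc (0 : ℝ) 1)
    {Ω : Type*} [MeasurableSpace Ω] (μ : Measure Ω) [IsProbabilityMeasure μ]
    (θ : ℤ → Ω → Fin N) (hθ : ∀ t, Measurable (θ t))
    (ν : ℕ → Ω → Bool) (hν : ∀ t, Measurable (ν t))
    (hMarkov : ∀ (k : ℕ) (i j : Fin N) (b : Bool) (E : Set Ω),
      MeasurableSet[pastSig θ ν k] E →
      (μ ({ω | θ ((k : ℤ) + 1) ω = j ∧ ν k ω = b ∧ θ (k : ℤ) ω = i} ∩ E)).toReal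
        = p i j * (if b then νh i else 1 - νh i) *
            (μ ({ω | θ (k : ℤ) ω = i} ∩ E)).toReal)
    (x0 : Fin nx → 𝕜) (x : ℕ → Ω → Fin nx → 𝕜)
    (hx0 : ∀ ω, x 0 ω = x0)
    (hxrec : ∀ (k : ℕ) (ω : Ω),
      x (k + 1) ω
        = Matrix.mulVec (A + (if ν k ω then (1 : 𝕜) else 0) • (B * K (θ ((k : ℤ) - 1) ω)))
            (x k ω))
 :
    ∀ (k : ℕ) (i j : Fin N),
      mMom μ θ x (k + 1) i j
        = ((p i j : ℝ) : 𝕜) •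
            (Matrix.mulVec A (∑ ℓ, mMom μ θ x k ℓ i)
              + ((νh i : ℝ) : 𝕜) •
                  Matrix.mulVec B (∑ ℓ, Matrix.mulVec (K ℓ) (mMom μ θ x k ℓ i))) := by
  intro k i j
  have hm := pastSig_le hθ hν k
  have hxm := measurable_state hx0 hxrec k
  have hxm0 : ∀ c, Measurable fun ω => x k ω c := fun c => (hxm c).mono hm le_rfl
  have hfin := finite_range_state hx0 hxrec k
  set T : Set Ω := {ω | θ (k : ℤ) ω = i} with hTdef
  have hT : MeasurableSet T := hθ k (measurableSet_singleton i)
  set S : Bool → Set Ω := fun b => {ω | θ ((k : ℤ) + 1) ω = j ∧ ν k ω = b ∧ θ (k : ℤ) ω = i}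
    with hSdef
  have hS : ∀ b, MeasurableSet (S b) := fun b =>
    (hθ _ (measurableSet_singleton j)).inter ((hν k (measurableSet_singleton b)).inter hT)
  -- The one-step transition matrix when `ν_k = b` and `θ_{k-1} = ℓ`.
  set F : Bool → Fin N → Matrix (Fin nx) (Fin nx) 𝕜 :=
    fun b ℓ => A + (if b then (1 : 𝕜) else 0) • (B * K ℓ) with hF
  have hfib : ∀ ℓ, (fun c => ∫ ω in T ∩ θ ((k : ℤ) - 1) ⁻¹' {ℓ}, x k ω c ∂μ) = mMom μ θ x k ℓ i :=
    fun ℓ => rfl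
  -- The contribution of `{ν_k = b}`: replace `x_{k+1}` by a past-measurable function, then
  -- apply the Markov hypothesis.
  have hpiece : ∀ b r, ∫ ω in S b, x (k + 1) ω r ∂μ
      = ((p i j * (if b then νh i else 1 - νh i) : ℝ) : 𝕜)
          * ∑ ℓ, (F b ℓ *ᵥ mMom μ θ x k ℓ i) r := by
    intro b r
    have hc : 0 ≤ p i j * (if b then νh i else 1 - νh i) :=
      mul_nonneg (hp_nonneg i j) (by have := hνh i; split_ifs <;> linarith [this.1, this.2])
    have h1 : ∫ ω in S b, x (k + 1) ω r ∂μ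
        = ∫ ω in S b, (F b (θ ((k : ℤ) - 1) ω) *ᵥ x k ω) r ∂μ := by
      refine setIntegral_congr_fun (hS b) ?_
      rintro ω ⟨-, hb, -⟩
      simp only [hxrec, hb, hF]
    rw [h1, setIntegral_markov hm hc (fun E hE => hMarkov k i j b E hE)
        (measurable_mulVec_apply (mΩ := pastSig θ ν k) (F b) (measurable_theta_past θ ν k) hxm r),
      setIntegral_mulVec_fiber (F b) (hθ _) hxm0 hfin hT]
    simp only [hfib]
  have hxi : ∀ r, Integrable (fun ω => x (k + 1) ω r) μ := fun r => by
    refine integrable_of_finite_range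
      ((measurable_state hx0 hxrec (k + 1) r).mono (pastSig_le hθ hν _) le_rfl)
      (((finite_range_state hx0 hxrec (k + 1)).image fun v => v r).subset ?_)
    rintro _ ⟨ω, rfl⟩
    exact ⟨x (k + 1) ω, ⟨ω, rfl⟩, rfl⟩
  have hset : {ω | θ ((k + 1 : ℕ) : ℤ) ω = j ∧ θ (((k + 1 : ℕ) : ℤ) - 1) ω = i}
      = S true ∪ S false := by
    have e1 : ((k + 1 : ℕ) : ℤ) = (k : ℤ) + 1 := by push_cast; rfl
    ext ω
    rw [e1, add_sub_cancel_right]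
    simp only [hSdef, Set.mem_ofPred_eq, Set.mem_union]
    cases ν k ω <;> simp
  have hdisj : Disjoint (S true) (S false) := by
    refine Set.disjoint_left.2 ?_
    rintro ω ⟨-, h, -⟩ ⟨-, h', -⟩
    simp [h] at h'
  funext r
  have hl : mMom μ θ x (k + 1) i j r = ∫ ω in S true ∪ S false, x (k + 1) ω r ∂μ := by
    rw [← hset]; rfl
  rw [hl, setIntegral_union hdisj (hS false) (hxi r).integrableOn (hxi r).integrableOn,
    hpiece, hpiece]
  simp only [hF, if_true, Bool.false_eq_true, if_false, one_smul, zero_smul, add_zero,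
    Matrix.add_mulVec, Pi.add_apply, Finset.sum_add_distrib, Pi.smul_apply, smul_eq_mul,
    Matrix.mulVec_sum, Finset.sum_apply, Matrix.mulVec_mulVec]
  push_cast
  ring
end
end

section
/- The operator T is the adjoint of the operator L with respect to the inner product ⟨S ; R⟩ := Σ_{i=1}^N Σ_{j=1}^N trace(S_{ij}^* R_{ij}) on N×N block matrices: for all block matrices S = [S_{ij}] and R = [R_{ij}] with blocks in 𝔽^{n_x×n_x}, ⟨L(S) ; R⟩ = ⟨S ; T(R)⟩. -/
/-!
For fixed `ℓ` and `i`, put `G = B * K ℓ` and `ν = νh i`. The summand of `L` indexed by `ℓ` is `p i j`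
times the map `X ↦ A X Aᴴ + ν G X Gᴴ + ν A X Gᴴ + ν G X Aᴴ`. By cyclicity of the trace, a term
`X ↦ U X Vᴴ` has adjoint `Y ↦ Uᴴ Y V` for the trace inner product; since `ν` is real, the adjoint of
the sum sends `Y` to `Aᴴ Y A + ν Gᴴ Y G + ν Gᴴ Y A + ν Aᴴ Y G`, the two mixed terms being exchanged
(`trace_conjTranspose_blockMap`). Evaluating at `Y = ∑ j, p i j • R i j` gives `T`, because `p i j` is
real as well and the sums over `ℓ` and `j` can be exchanged.
-/

open MeasureTheory Matrix ProbabilityTheory Filter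
open scoped BigOperators ComplexOrder

noncomputable section

variable {𝕜 : Type*} [RCLike 𝕜]

/-- The sandwich map `X ↦ U X Vᴴ` has adjoint `Y ↦ Uᴴ Y V` for the trace inner product. -/
lemma trace_conjTranspose_sandwich {𝕜 : Type*} [RCLike 𝕜] {n : ℕ}
    (U V X Y : Matrix (Fin n) (Fin n) 𝕜) :
    ((U * X * Vᴴ)ᴴ * Y).trace = (Xᴴ * (Uᴴ * Y * V)).trace := by
  simp only [conjTranspose_mul, conjTranspose_conjTranspose, Matrix.mul_assoc]
  rw [Matrix.trace_mul_comm]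
  simp only [Matrix.mul_assoc]

/-- The contribution of one block `X = S ℓ i` to `L`, before weighting by `p i j`, where `G` stands
for `B * K ℓ` and `ν` for `νh i`. -/
def blockMap {𝕜 : Type*} [RCLike 𝕜] {n : ℕ} (A G : Matrix (Fin n) (Fin n) 𝕜) (ν : ℝ)
    (X : Matrix (Fin n) (Fin n) 𝕜) : Matrix (Fin n) (Fin n) 𝕜 :=
  A * X * Aᴴ + (ν : 𝕜) • (G * X * Gᴴ) + (ν : 𝕜) • (A * X * Gᴴ) + (ν : 𝕜) • (G * X * Aᴴ)

lemma trace_conjTranspose_blockMap {𝕜 : Type*} [RCLike 𝕜] {n : ℕ}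
    (A G : Matrix (Fin n) (Fin n) 𝕜) (ν : ℝ) (X Y : Matrix (Fin n) (Fin n) 𝕜) :
    ((blockMap A G ν X)ᴴ * Y).trace =
      (Xᴴ * (Aᴴ * Y * A + (ν : 𝕜) • (Gᴴ * Y * G) + (ν : 𝕜) • (Gᴴ * Y * A)
        + (ν : 𝕜) • (Aᴴ * Y * G))).trace := by
  have hν : star (ν : 𝕜) = ν := RCLike.conj_ofReal ν
  simp only [blockMap, conjTranspose_add, conjTranspose_smul, hν, Matrix.add_mul, Matrix.mul_add,
    Matrix.smul_mul, Matrix.mul_smul, trace_add, trace_smul, trace_conjTranspose_sandwich]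
  ring

lemma Lop_eq_smul_sum_blockMap {𝕜 : Type*} [RCLike 𝕜] {N nx nu : ℕ}
    (A : Matrix (Fin nx) (Fin nx) 𝕜) (B : Matrix (Fin nx) (Fin nu) 𝕜)
    (K : Fin N → Matrix (Fin nu) (Fin nx) 𝕜) (p : Fin N → Fin N → ℝ) (νh : Fin N → ℝ)
    (S : Fin N → Fin N → Matrix (Fin nx) (Fin nx) 𝕜) (i j : Fin N) :
    Lop A B K p νh S i j = (p i j : 𝕜) • ∑ ℓ, blockMap A (B * K ℓ) (νh i) (S ℓ i) := by
  simp only [Lop, blockMap, Finset.sum_add_distrib, ← Finset.smul_sum, Matrix.mul_sum,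
    Matrix.sum_mul, conjTranspose_mul, Matrix.mul_assoc]

/-- `T` is the adjoint of `L` for the inner product
`⟨S ; R⟩ = Σ_{i,j} trace(S_{ij}^* R_{ij})`. -/
theorem Tadj_is_adjoint_of_Lop
    {𝕜 : Type*} [RCLike 𝕜]
    {N nx nu : ℕ} (hN : 1 ≤ N) (hnx : 1 ≤ nx) (hnu : 1 ≤ nu)
    (A : Matrix (Fin nx) (Fin nx) 𝕜) (B : Matrix (Fin nx) (Fin nu) 𝕜)
    (K : Fin N → Matrix (Fin nu) (Fin nx) 𝕜)
    (p : Fin N → Fin N → ℝ) (hp_nonneg : ∀ i j, 0 ≤ p i j) (hp_row : ∀ i, ∑ j, p i j = 1)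
    (νh : Fin N → ℝ) (hνh : ∀ i, νh i ∈ Set.Icc (0 : ℝ) 1)
 :
    ∀ (S R : Fin N → Fin N → Matrix (Fin nx) (Fin nx) 𝕜),
      ∑ i, ∑ j, ((Lop A B K p νh S i j)ᴴ * R i j).trace
        = ∑ i, ∑ j, ((S i j)ᴴ * Tadj A B K p νh R i j).trace := by
  intro S R
  have hp : ∀ i j, star (p i j : 𝕜) = p i j := fun i j => RCLike.conj_ofReal (p i j)
  have hT : ∀ ℓ i, ((S ℓ i)ᴴ * Tadj A B K p νh R ℓ i).trace =
      ∑ j, (p i j : 𝕜) * ((blockMap A (B * K ℓ) (νh i) (S ℓ i))ᴴ * R i j).trace := by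
    intro ℓ i
    rw [Tadj, ← conjTranspose_mul, ← trace_conjTranspose_blockMap]
    simp only [Matrix.mul_sum, trace_sum, Matrix.mul_smul, trace_smul, smul_eq_mul]
  have hL : ∀ i j, ((Lop A B K p νh S i j)ᴴ * R i j).trace =
      ∑ ℓ, (p i j : 𝕜) * ((blockMap A (B * K ℓ) (νh i) (S ℓ i))ᴴ * R i j).trace := by
    intro i j
    rw [Lop_eq_smul_sum_blockMap]
    simp only [conjTranspose_smul, hp, conjTranspose_sum, Matrix.smul_mul, Matrix.sum_mul,
      trace_smul, trace_sum, smul_eq_mul, Finset.mul_sum]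
  simp only [hL, hT]
  -- `∑ i, ∑ j, ∑ ℓ` on the left, `∑ ℓ, ∑ i, ∑ j` on the right
  rw [Finset.sum_comm (γ := Fin N) (f := fun ℓ i => ∑ j, (p i j : 𝕜) *
    ((blockMap A (B * K ℓ) (νh i) (S ℓ i))ᴴ * R i j).trace)]
  exact Finset.sum_congr rfl fun i _ => Finset.sum_comm
end
end

section
/- The operator L is Hermitian-preserving and positive: for any N×N block matrix S = [S_{ℓi}] with blocks S_{ℓi} ∈ 𝔽^{n_x×n_x}, (i) if every block S_{ℓi} is Hermitian then every block L_{ij}(S) is Hermitian, and (ii) if every block S_{ℓi} is positive semidefinite then every block L_{ij}(S) is positive semidefinite. The same two properties hold for the operator T. -/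
/-!
Write `φ(a, C, S) = (1 - a) • A S Aᴴ + a • C S Cᴴ`. For real `a ∈ [0,1]` this is a convex
combination of two congruences of `S`, so it preserves Hermitian and positive semidefinite matrices.
Completing the product with `C = A + B K_ℓ` absorbs the two cross terms (`convexCongr_add_eq`), which gives
`L_{ij}(S) = p_{ij} ∑_ℓ φ(ν̂_i, A + B K_ℓ, S_{ℓi})` (`Lop_eq`), and `T_{ℓi}(S)` is the same expression
built from `Aᴴ`, `(A + B K_ℓ)ᴴ` and the matrix `∑_j p_{ij} S_{ij}` (`Tadj_eq`). Nonnegative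
combinations preserve both properties, so both operators do.
-/

open MeasureTheory Matrix ProbabilityTheory Filter
open scoped BigOperators ComplexOrder

noncomputable section

variable {𝕜 : Type*} [RCLike 𝕜]

/-- The convex combination, with weight `a`, of the congruences of `S` by `A` and by `C`. -/
def convexCongr {𝕜 : Type*} [RCLike 𝕜] {n : ℕ} (a : ℝ)
    (A C S : Matrix (Fin n) (Fin n) 𝕜) : Matrix (Fin n) (Fin n) 𝕜 :=
  ((1 - a : ℝ) : 𝕜) • (A * S * Aᴴ) + ((a : ℝ) : 𝕜) • (C * S * Cᴴ)

theorem isHermitian_real_smul {𝕜 : Type*} [RCLike 𝕜] {n : ℕ} (a : ℝ)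
    {S : Matrix (Fin n) (Fin n) 𝕜} (hS : S.IsHermitian) : (((a : ℝ) : 𝕜) • S).IsHermitian := by
  rw [Matrix.IsHermitian, Matrix.conjTranspose_smul, hS.eq]
  simp

theorem isHermitian_sum_family {𝕜 : Type*} [RCLike 𝕜] {n N : ℕ}
    {S : Fin N → Matrix (Fin n) (Fin n) 𝕜} (hS : ∀ i, (S i).IsHermitian) :
    (∑ i, S i).IsHermitian := by
  rw [Matrix.IsHermitian, Matrix.conjTranspose_sum]
  exact Finset.sum_congr rfl fun i _ => (hS i).eq

theorem posSemidef_real_smul {𝕜 : Type*} [RCLike 𝕜] {n : ℕ} {a : ℝ} (ha : 0 ≤ a)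
    {S : Matrix (Fin n) (Fin n) 𝕜} (hS : S.PosSemidef) : (((a : ℝ) : 𝕜) • S).PosSemidef :=
  hS.smul (RCLike.ofReal_nonneg.mpr ha)

theorem convexCongr_isHermitian {𝕜 : Type*} [RCLike 𝕜] {n : ℕ} (a : ℝ)
    (A C : Matrix (Fin n) (Fin n) 𝕜) {S : Matrix (Fin n) (Fin n) 𝕜} (hS : S.IsHermitian) :
    (convexCongr a A C S).IsHermitian :=
  (isHermitian_real_smul _ (isHermitian_mul_mul_conjTranspose A hS)).add
    (isHermitian_real_smul _ (isHermitian_mul_mul_conjTranspose C hS))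

theorem convexCongr_posSemidef {𝕜 : Type*} [RCLike 𝕜] {n : ℕ} {a : ℝ}
    (ha : a ∈ Set.Icc (0 : ℝ) 1) (A C : Matrix (Fin n) (Fin n) 𝕜)
    {S : Matrix (Fin n) (Fin n) 𝕜} (hS : S.PosSemidef) : (convexCongr a A C S).PosSemidef :=
  (posSemidef_real_smul (sub_nonneg.mpr ha.2) (hS.mul_mul_conjTranspose_same A)).add
    (posSemidef_real_smul ha.1 (hS.mul_mul_conjTranspose_same C))

/-- Expanding the congruence by `A + D` turns the convex combination into the form, with cross
terms, in which `Lop` and `Tadj` are defined. -/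
theorem convexCongr_add_eq {𝕜 : Type*} [RCLike 𝕜] {n : ℕ} (a : ℝ)
    (A D S : Matrix (Fin n) (Fin n) 𝕜) :
    convexCongr a A (A + D) S
      = A * S * Aᴴ + (a : 𝕜) • (D * S * Dᴴ) + (a : 𝕜) • (A * S * Dᴴ)
        + (a : 𝕜) • (D * S * Aᴴ) := by
  rw [convexCongr, Matrix.conjTranspose_add]
  push_cast
  simp only [Matrix.add_mul, Matrix.mul_add]
  module

theorem Lop_eq {𝕜 : Type*} [RCLike 𝕜] {N nx nu : ℕ}
    (A : Matrix (Fin nx) (Fin nx) 𝕜) (B : Matrix (Fin nx) (Fin nu) 𝕜)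
    (K : Fin N → Matrix (Fin nu) (Fin nx) 𝕜) (p : Fin N → Fin N → ℝ) (νh : Fin N → ℝ)
    (S : Fin N → Fin N → Matrix (Fin nx) (Fin nx) 𝕜) (i j : Fin N) :
    Lop A B K p νh S i j
      = ((p i j : ℝ) : 𝕜) • ∑ ℓ, convexCongr (νh i) A (A + B * K ℓ) (S ℓ i) := by
  simp only [convexCongr_add_eq, Lop, Matrix.conjTranspose_mul, Finset.sum_add_distrib,
    ← Finset.smul_sum, Matrix.mul_sum, Matrix.sum_mul, Matrix.mul_assoc]

theorem Tadj_eq {𝕜 : Type*} [RCLike 𝕜] {N nx nu : ℕ}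
    (A : Matrix (Fin nx) (Fin nx) 𝕜) (B : Matrix (Fin nx) (Fin nu) 𝕜)
    (K : Fin N → Matrix (Fin nu) (Fin nx) 𝕜) (p : Fin N → Fin N → ℝ) (νh : Fin N → ℝ)
    (S : Fin N → Fin N → Matrix (Fin nx) (Fin nx) 𝕜) (ℓ i : Fin N) :
    Tadj A B K p νh S ℓ i
      = convexCongr (νh i) Aᴴ (Aᴴ + (B * K ℓ)ᴴ) (∑ j, ((p i j : ℝ) : 𝕜) • S i j) := by
  rw [convexCongr_add_eq, Tadj]
  simp only [Matrix.conjTranspose_conjTranspose, Matrix.conjTranspose_mul]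
  abel

/-- `L` and `T` are Hermitian-preserving and positive operators. -/
theorem Lop_Tadj_hermitian_positive
    {𝕜 : Type*} [RCLike 𝕜]
    {N nx nu : ℕ} (hN : 1 ≤ N) (hnx : 1 ≤ nx) (hnu : 1 ≤ nu)
    (A : Matrix (Fin nx) (Fin nx) 𝕜) (B : Matrix (Fin nx) (Fin nu) 𝕜)
    (K : Fin N → Matrix (Fin nu) (Fin nx) 𝕜)
    (p : Fin N → Fin N → ℝ) (hp_nonneg : ∀ i j, 0 ≤ p i j) (hp_row : ∀ i, ∑ j, p i j = 1)
    (νh : Fin N → ℝ) (hνh : ∀ i, νh i ∈ Set.Icc (0 : ℝ) 1)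
 :
    (∀ S : Fin N → Fin N → Matrix (Fin nx) (Fin nx) 𝕜,
        (∀ ℓ i, (S ℓ i).IsHermitian) → ∀ i j, (Lop A B K p νh S i j).IsHermitian)
    ∧ (∀ S : Fin N → Fin N → Matrix (Fin nx) (Fin nx) 𝕜,
        (∀ ℓ i, (S ℓ i).PosSemidef) → ∀ i j, (Lop A B K p νh S i j).PosSemidef)
    ∧ (∀ S : Fin N → Fin N → Matrix (Fin nx) (Fin nx) 𝕜,
        (∀ ℓ i, (S ℓ i).IsHermitian) → ∀ ℓ i, (Tadj A B K p νh S ℓ i).IsHermitian)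
    ∧ (∀ S : Fin N → Fin N → Matrix (Fin nx) (Fin nx) 𝕜,
        (∀ ℓ i, (S ℓ i).PosSemidef) → ∀ ℓ i, (Tadj A B K p νh S ℓ i).PosSemidef) := by
  refine ⟨fun S hS i j => ?_, fun S hS i j => ?_, fun S hS ℓ i => ?_, fun S hS ℓ i => ?_⟩
  · rw [Lop_eq]
    exact isHermitian_real_smul _
      (isHermitian_sum_family fun ℓ => convexCongr_isHermitian _ _ _ (hS ℓ i))
  · rw [Lop_eq]
    exact posSemidef_real_smul (hp_nonneg i j)
      (Matrix.posSemidef_sum _ fun ℓ _ => convexCongr_posSemidef (hνh i) _ _ (hS ℓ i))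
  · rw [Tadj_eq]
    exact convexCongr_isHermitian _ _ _
      (isHermitian_sum_family fun j => isHermitian_real_smul _ (hS i j))
  · rw [Tadj_eq]
    exact convexCongr_posSemidef (hνh i) _ _
      (Matrix.posSemidef_sum _ fun j _ => posSemidef_real_smul (hp_nonneg i j) (hS i j))
end
end

section
/- Let Λ be the matrix representing the operator L in the vec² coordinates, i.e. vec²(L(S)) = Λ vec²(S) for all N×N block matrices S. Then the operator T is represented by the conjugate transpose of Λ, i.e. vec²(T(S)) = Λ^* vec²(S) for all S; consequently the spectral radii coincide: ρ(T) = ρ(L) = ρ(Λ), where ρ(L) and ρ(T) denote the spectral radii of L and T as linear operators on the space of N×N block matrices. -/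
/-!
The pairing `star (vec2 X) ⬝ᵥ vec2 Y` equals `∑ tr (X_{ℓi}ᴴ Y_{ℓi})`, and cyclicity of the trace
shows that `T` is the adjoint of `L` for it (`star_vec2_dotProduct_Tadj`). As `vec2` is onto and
the standard pairing is nondegenerate, `Λᴴ` represents `T`. A representing matrix is unique
(`eq_of_mulVec_vec2`), so the spectral radii reduce to that of `Λᴴ`, whose spectrum is the complex
conjugate of that of `Λ` (`specRadK_conjTranspose`).
-/

open MeasureTheory Matrix ProbabilityTheory Filter
open scoped BigOperators ComplexOrder

noncomputable section

variable {𝕜 : Type*} [RCLike 𝕜]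

theorem star_vec2_dotProduct_vec2 {N nx : ℕ}
    (X Y : Fin N → Fin N → Matrix (Fin nx) (Fin nx) 𝕜) :
    star (vec2 X) ⬝ᵥ vec2 Y = ∑ i, ∑ ℓ, trace ((X ℓ i)ᴴ * Y ℓ i) := by
  simp only [dotProduct, vec2, Fintype.sum_prod_type, trace, diag_apply, mul_apply,
    conjTranspose_apply, Pi.star_apply]

/-- `T` is the adjoint of `L` for the pairing `(X, Y) ↦ ∑ tr (Xᴴ Y)`. -/
theorem star_vec2_dotProduct_Tadj {N nx nu : ℕ}
    (A : Matrix (Fin nx) (Fin nx) 𝕜) (B : Matrix (Fin nx) (Fin nu) 𝕜)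
    (K : Fin N → Matrix (Fin nu) (Fin nx) 𝕜) (p : Fin N → Fin N → ℝ) (νh : Fin N → ℝ)
    (S R : Fin N → Fin N → Matrix (Fin nx) (Fin nx) 𝕜) :
    star (vec2 S) ⬝ᵥ vec2 (Tadj A B K p νh R) =
      star (vec2 (Lop A B K p νh S)) ⬝ᵥ vec2 R := by
  have cyc : ∀ (C D : Matrix (Fin nx) (Fin nx) 𝕜) (X W : Matrix (Fin nx) (Fin nx) 𝕜),
      trace (Xᴴ * (Cᴴ * W * D)) = trace ((C * X * Dᴴ)ᴴ * W) := by
    intro C D X W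
    rw [conjTranspose_mul, conjTranspose_mul, conjTranspose_conjTranspose, Matrix.mul_assoc D,
      trace_mul_comm D]
    simp only [Matrix.mul_assoc]
  rw [star_vec2_dotProduct_vec2, star_vec2_dotProduct_vec2,
    Finset.sum_comm (f := fun i ℓ => trace ((Lop A B K p νh S ℓ i)ᴴ * R ℓ i))]
  refine Finset.sum_congr rfl fun i _ => ?_
  -- The weights `p i j` move from `L` onto `R`, leaving `∑ j, p i j • R i j` on the right.
  have hR : ∑ j, trace ((Lop A B K p νh S i j)ᴴ * R i j) =
      ∑ ℓ, trace ((A * S ℓ i * Aᴴ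
        + ((νh i : ℝ) : 𝕜) • ((B * K ℓ) * S ℓ i * (B * K ℓ)ᴴ)
        + ((νh i : ℝ) : 𝕜) • (A * S ℓ i * (B * K ℓ)ᴴ)
        + ((νh i : ℝ) : 𝕜) • ((B * K ℓ) * S ℓ i * Aᴴ))ᴴ * ∑ j, ((p i j : ℝ) : 𝕜) • R i j) := by
    rw [← trace_sum, ← trace_sum, ← Finset.sum_mul, ← conjTranspose_sum, Finset.mul_sum]
    congr 1
    refine Finset.sum_congr rfl fun j _ => ?_
    simp only [Lop, conjTranspose_smul, RCLike.star_def, RCLike.conj_ofReal, Matrix.smul_mul,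
      Matrix.mul_smul, conjTranspose_mul, Finset.sum_add_distrib, ← Finset.smul_sum,
      Matrix.mul_sum, Matrix.sum_mul, Matrix.mul_assoc]
  rw [hR]
  refine Finset.sum_congr rfl fun ℓ _ => ?_
  have hBK : (K ℓ)ᴴ * Bᴴ = (B * K ℓ)ᴴ := (conjTranspose_mul _ _).symm
  simp only [Tadj, hBK, conjTranspose_add, conjTranspose_smul, RCLike.star_def,
    RCLike.conj_ofReal, Matrix.mul_add, Matrix.add_mul, Matrix.smul_mul, Matrix.mul_smul,
    trace_add, trace_smul, cyc]
  abel

/-- The spectrum of `Mᴴ` is the complex conjugate of that of `M`, and conjugation preserves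
absolute values. -/
theorem specRad_conjTranspose {n : Type*} [Fintype n] [DecidableEq n] (M : Matrix n n ℂ) :
    specRad Mᴴ = specRad M := by
  have h : spectrum ℂ Mᴴ = star (spectrum ℂ M) := spectrum.map_star M
  unfold specRad
  congr 1
  rw [h, ← Set.image_star, Set.image_image]
  simp only [norm_star]

theorem specRadK_conjTranspose {n : Type*} [Fintype n] [DecidableEq n] (M : Matrix n n 𝕜) :
    specRadK Mᴴ = specRadK M := by
  have h : Mᴴ.map (rcToComplex 𝕜) = (M.map (rcToComplex 𝕜))ᴴ :=
    conjTranspose_map (rcToComplex 𝕜) fun z => by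
      simp [rcToComplex, Complex.ext_iff]
  rw [specRadK, h, specRad_conjTranspose, specRadK]

theorem vec2_surjective {F : Type*} {N nx : ℕ} :
    Function.Surjective (vec2 : (Fin N → Fin N → Matrix (Fin nx) (Fin nx) F) → _) :=
  fun v => ⟨fun ℓ i => of fun r c => v ((i, ℓ), (c, r)), rfl⟩

/-- Since `vec2` is onto, two matrices representing the same operator are equal. -/
theorem eq_of_mulVec_vec2 {N nx : ℕ}
    {M M' : Matrix ((Fin N × Fin N) × Fin nx × Fin nx) ((Fin N × Fin N) × Fin nx × Fin nx) 𝕜}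
    (h : ∀ S : Fin N → Fin N → Matrix (Fin nx) (Fin nx) 𝕜, M *ᵥ vec2 S = M' *ᵥ vec2 S) :
    M = M' :=
  mulVec_injective (funext fun v => by obtain ⟨S, rfl⟩ := vec2_surjective v; exact h S)

/-- If `Λ` represents `L` in the `vec²` coordinates, then `Λᴴ` represents
`T`; consequently the spectral radii coincide: any matrix representing `T` (resp. `L`) has
the same spectral radius as `Λ`. -/
theorem Tadj_represented_by_conjTranspose
    {𝕜 : Type*} [RCLike 𝕜]
    {N nx nu : ℕ} (hN : 1 ≤ N) (hnx : 1 ≤ nx) (hnu : 1 ≤ nu)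
    (A : Matrix (Fin nx) (Fin nx) 𝕜) (B : Matrix (Fin nx) (Fin nu) 𝕜)
    (K : Fin N → Matrix (Fin nu) (Fin nx) 𝕜)
    (p : Fin N → Fin N → ℝ) (hp_nonneg : ∀ i j, 0 ≤ p i j) (hp_row : ∀ i, ∑ j, p i j = 1)
    (νh : Fin N → ℝ) (hνh : ∀ i, νh i ∈ Set.Icc (0 : ℝ) 1)
    (Λ : Matrix ((Fin N × Fin N) × Fin nx × Fin nx) ((Fin N × Fin N) × Fin nx × Fin nx) 𝕜)
    (hΛ : ∀ S : Fin N → Fin N → Matrix (Fin nx) (Fin nx) 𝕜,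
      vec2 (Lop A B K p νh S) = Matrix.mulVec Λ (vec2 S)) :
    (∀ S : Fin N → Fin N → Matrix (Fin nx) (Fin nx) 𝕜,
        vec2 (Tadj A B K p νh S) = Matrix.mulVec Λᴴ (vec2 S))
    ∧ (∀ Λ' : Matrix ((Fin N × Fin N) × Fin nx × Fin nx) ((Fin N × Fin N) × Fin nx × Fin nx) 𝕜,
        (∀ S : Fin N → Fin N → Matrix (Fin nx) (Fin nx) 𝕜,
          vec2 (Tadj A B K p νh S) = Matrix.mulVec Λ' (vec2 S)) →
        specRadK Λ' = specRadK Λ)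
    ∧ (∀ Λ₀ : Matrix ((Fin N × Fin N) × Fin nx × Fin nx) ((Fin N × Fin N) × Fin nx × Fin nx) 𝕜,
        (∀ S : Fin N → Fin N → Matrix (Fin nx) (Fin nx) 𝕜,
          vec2 (Lop A B K p νh S) = Matrix.mulVec Λ₀ (vec2 S)) →
        specRadK Λ₀ = specRadK Λ) := by
  have hT : ∀ S : Fin N → Fin N → Matrix (Fin nx) (Fin nx) 𝕜,
      vec2 (Tadj A B K p νh S) = Matrix.mulVec Λᴴ (vec2 S) := by
    intro R
    refine dotProduct_eq _ _ fun v => ?_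
    -- Every test vector has the form `star (vec2 S)`.
    obtain ⟨S, hS⟩ := vec2_surjective (star v)
    have hv : v = star (vec2 S) := by rw [hS, star_star]
    rw [dotProduct_comm, dotProduct_comm _ v, hv, star_vec2_dotProduct_Tadj, hΛ, star_mulVec,
      dotProduct_mulVec]
  refine ⟨hT, fun Λ' h' => ?_, fun Λ₀ h₀ => ?_⟩
  · rw [eq_of_mulVec_vec2 fun S => (h' S).symm.trans (hT S), specRadK_conjTranspose]
  · rw [eq_of_mulVec_vec2 fun S => (h₀ S).symm.trans (hΛ S)]
end
end
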